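/- arXiv:2111.01047 — 4 statements merged into one kernel-verified Lean document; each statement's English description precedes it below -/
import Mathlib

section
/- Let n ≥ 2 and let k be an integer with 2 ≤ k ≤ n. If g : ℝ₊^n → ℝ is a convex function satisfying g(x) ≤ Q_k(x) for all x ∈ ℝ₊^n (where ℝ₊^n denotes the set of vectors with all coordinates nonnegative), then g(x) ≤ 0 for all x ∈ ℝ₊^n. Consequently, since Q_k(x) ≥ 0 on ℝ₊^n, the lower convex envelope of Q_k on ℝ₊^n is the zero function. -/
/-!
The orthant is the convex hull of its coordinate half-axes: `x` is the average of the `n` points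
`n xᵢ eᵢ`. So a convex function on the orthant is bounded by any bound that holds on the half-axes.
A vector on a half-axis has at most one positive coordinate, hence its `k`-th largest coordinate is
at most `0` as soon as `k ≥ 2`.
-/

/-- `Qk k x` is the `k`-th largest coordinate of `x : Fin n → ℝ` (meaningful for `1 ≤ k ≤ n`):
`Tuple.sort x` sorts the coordinates in nondecreasing order, so the `k`-th largest one
sits at (0-indexed) position `n - k`. -/
noncomputable def Qk {n : ℕ} (k : ℕ) (x : Fin n → ℝ) : ℝ :=
  if h : n - k < n then x (Tuple.sort x ⟨n - k, h⟩) else 0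

open Finset

section NonnegOrthant

variable {𝕜 ι : Type*} [Field 𝕜] [LinearOrder 𝕜] [IsStrictOrderedRing 𝕜]
  [Finite ι] [Nonempty ι] [DecidableEq ι]

lemma convexHull_iUnion_single_image_Ici :
    convexHull 𝕜 (⋃ i, Pi.single (M := fun _ : ι ↦ 𝕜) i '' Set.Ici 0) = Set.Ici 0 := by
  cases nonempty_fintype ι
  refine (convexHull_min ?_ (convex_Ici 0)).antisymm fun x hx ↦ ?_
  · simp only [Set.iUnion_subset_iff, Set.image_subset_iff]
    exact fun i c hc ↦ Pi.single_nonneg.2 hc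
  · have hcard : (Fintype.card ι : 𝕜) ≠ 0 := Nat.cast_ne_zero.2 Fintype.card_ne_zero
    have average : ∑ i, (Fintype.card ι : 𝕜)⁻¹ • Pi.single i (Fintype.card ι * x i) = x := by
      simp only [← Pi.single_smul, smul_eq_mul, inv_mul_cancel_left₀ hcard, univ_sum_single]
    rw [← average]
    refine (convex_convexHull 𝕜 _).sum_mem (fun _ _ ↦ by positivity) (by simp [hcard])
      fun i _ ↦ subset_convexHull 𝕜 _ (Set.mem_iUnion_of_mem i (Set.mem_image_of_mem _ ?_))
    exact mul_nonneg (Nat.cast_nonneg _) (hx i)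

lemma le_of_convexOn_Ici_of_forall_single_le {β : Type*} [AddCommGroup β] [LinearOrder β]
    [IsOrderedAddMonoid β] [Module 𝕜 β] [IsStrictOrderedModule 𝕜 β] {g : (ι → 𝕜) → β} {b : β}
    (hg : ConvexOn 𝕜 (Set.Ici 0) g) (hb : ∀ i, ∀ c ≥ 0, g (Pi.single i c) ≤ b)
    {x : ι → 𝕜} (hx : 0 ≤ x) : g x ≤ b := by
  have hull := convexHull_iUnion_single_image_Ici (𝕜 := 𝕜) (ι := ι)
  obtain ⟨y, hy, hxy⟩ :=
    hg.exists_ge_of_mem_convexHull (hull ▸ subset_convexHull 𝕜 _) (hull ▸ hx : x ∈ convexHull 𝕜 _)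
  obtain ⟨i, c, hc, rfl⟩ := Set.mem_iUnion.1 hy
  exact hxy.trans (hb i c hc)

end NonnegOrthant

section Qk

variable {n k : ℕ}

lemma Qk_le_iff_card_lt (hk : 1 ≤ k) (hkn : k ≤ n) {x : Fin n → ℝ} {c : ℝ} :
    Qk k x ≤ c ↔ #{i | c < x i} < k := by
  have hlt : n - k < n := by lia
  have card_sorted : #{i | (x ∘ Tuple.sort x) i ≤ c} = #{i | x i ≤ c} :=
    card_equiv (Tuple.sort x) (by simp)
  have card_compl : #{i | x i ≤ c} + #{i | c < x i} = n := by
    simpa only [not_le, card_univ, Fintype.card_fin] using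
      card_filter_add_card_filter_not (s := univ) (fun i ↦ x i ≤ c)
  calc Qk k x ≤ c ↔ (x ∘ Tuple.sort x) ⟨n - k, hlt⟩ ≤ c := by rw [Qk, dif_pos hlt, Function.comp]
    _ ↔ n - k < #{i | (x ∘ Tuple.sort x) i ≤ c} :=
      (Tuple.lt_card_le_iff_apply_le_of_monotone (Tuple.monotone_sort x)).symm
    _ ↔ #{i | c < x i} < k := by lia

lemma Qk_single_nonpos (hk : 2 ≤ k) (hkn : k ≤ n) (i : Fin n) (c : ℝ) :
    Qk k (Pi.single i c) ≤ 0 := by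
  have support_subset : ({j | 0 < (Pi.single i c : Fin n → ℝ) j} : Finset (Fin n)) ⊆ {i} := by
    intro j hj
    by_contra hji
    simp_all
  exact (Qk_le_iff_card_lt (by lia) hkn).2 ((card_le_card support_subset).trans_lt hk)

lemma Qk_nonneg {x : Fin n → ℝ} (hx : 0 ≤ x) : 0 ≤ Qk k x := by
  unfold Qk
  split_ifs
  · exact hx _
  · exact le_rfl

end Qk

theorem convex_minorant_nonpos_on_orthant (n k : ℕ) (hn : 2 ≤ n) (hk : 2 ≤ k) (hkn : k ≤ n)
    (g : (Fin n → ℝ) → ℝ)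
    (hg : ConvexOn ℝ {x : Fin n → ℝ | ∀ i, 0 ≤ x i} g)
    (hle : ∀ x : Fin n → ℝ, (∀ i, 0 ≤ x i) → g x ≤ Qk k x) :
    (∀ x : Fin n → ℝ, (∀ i, 0 ≤ x i) → g x ≤ 0) ∧
      (∀ x : Fin n → ℝ, (∀ i, 0 ≤ x i) → 0 ≤ Qk k x) := by
  have : Nonempty (Fin n) := ⟨0, by lia⟩
  have le_Qk : ∀ x ≥ 0, g x ≤ Qk k x := hle
  have nonpos_on_axes : ∀ i, ∀ c ≥ 0, g (Pi.single i c) ≤ 0 := fun i c hc ↦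
    (le_Qk _ (Pi.single_nonneg.2 hc)).trans (Qk_single_nonpos hk hkn i c)
  exact ⟨fun _ hx ↦ le_of_convexOn_Ici_of_forall_single_le hg nonpos_on_axes hx,
    fun _ hx ↦ Qk_nonneg hx⟩
end

section
/- Let 1 ≤ k ≤ n and let x ∈ [0,1]^n. Then for every subset W of {1,…,n} with |W| ≥ k, Q_k(x) ≥ (1/(|W| − k + 1)) · ( (Σ_{i ∈ W} x_i) − k + 1 ). -/
/-! Let `q` be the `k`-th largest coordinate. At most `k - 1` coordinates exceed `q`, so those
lying in `W` can be enclosed in some `T ⊆ W` with exactly `k - 1` elements. Bounding the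
coordinates by `1` on `T` and by `q` on `W \ T` gives `∑ i ∈ W, x i ≤ (k - 1) + (|W| - k + 1) q`,
which rearranges to the claim. -/

open Finset

theorem card_filter_apply_sort_lt_le {α : Type*} [LinearOrder α] {n : ℕ} (f : Fin n → α)
    (j : Fin n) : #{i | f (Tuple.sort f j) < f i} ≤ n - 1 - j := by
  rw [← Fin.card_Ioi]
  refine card_le_card_of_injOn (Tuple.sort f).symm (fun i hi ↦ ?_) (Equiv.injective _).injOn
  have hlt : (f ∘ Tuple.sort f) j < (f ∘ Tuple.sort f) ((Tuple.sort f).symm i) := by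
    simpa using hi
  exact mem_coe.2 (mem_Ioi.2 ((Tuple.monotone_sort f).reflect_lt hlt))

theorem card_filter_Qk_lt_le {n k : ℕ} (hk : 1 ≤ k) (hkn : k ≤ n) (x : Fin n → ℝ) :
    #{i | Qk k x < x i} ≤ k - 1 := by
  have hpos : n - k < n := by lia
  rw [Qk, dif_pos hpos]
  calc #{i | x (Tuple.sort x ⟨n - k, hpos⟩) < x i}
      ≤ n - 1 - (n - k) := card_filter_apply_sort_lt_le x ⟨n - k, hpos⟩
    _ = k - 1 := by lia

theorem sum_le_nsmul_add_nsmul_of_card_filter_lt_le {ι M : Type*} [AddCommMonoid M]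
    [LinearOrder M] [IsOrderedAddMonoid M] {s : Finset ι} {f : ι → M} {q b : M} {m : ℕ}
    (hb : ∀ i ∈ s, f i ≤ b) (hm : #{i ∈ s | q < f i} ≤ m) (hms : m ≤ #s) :
    ∑ i ∈ s, f i ≤ (#s - m) • q + m • b := by
  classical
  obtain ⟨t, hft, hts, rfl⟩ := exists_subsuperset_card_eq (filter_subset _ s) hm hms
  have hq : ∀ i ∈ s \ t, f i ≤ q := fun i hi ↦ by
    obtain ⟨his, hit⟩ := mem_sdiff.1 hi
    exact not_lt.1 fun hlt ↦ hit (hft (mem_filter.2 ⟨his, hlt⟩))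
  calc ∑ i ∈ s, f i = ∑ i ∈ s \ t, f i + ∑ i ∈ t, f i := (sum_sdiff hts).symm
    _ ≤ #(s \ t) • q + #t • b :=
      add_le_add (sum_le_card_nsmul _ f q hq) (sum_le_card_nsmul t f b fun i hi ↦ hb i (hts hi))
    _ = (#s - #t) • q + #t • b := by rw [card_sdiff_of_subset hts]

theorem symmetric_lower_bound_general {n k : ℕ} (hk : 1 ≤ k) {x : Fin n → ℝ}
    {W : Finset (Fin n)} (hx : ∀ i ∈ W, x i ≤ 1) (hW : k ≤ #W) :
    Qk k x ≥ (1 / ((#W : ℝ) - k + 1)) * ((∑ i ∈ W, x i) - k + 1) := by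
  have hkn : k ≤ n := hW.trans (card_finset_fin_le W)
  have hcard : #{i ∈ W | Qk k x < x i} ≤ k - 1 :=
    (card_le_card (filter_subset_filter _ (subset_univ W))).trans (card_filter_Qk_lt_le hk hkn x)
  have hsum : ∑ i ∈ W, x i ≤ (#W - (k - 1)) • Qk k x + (k - 1) • (1 : ℝ) :=
    sum_le_nsmul_add_nsmul_of_card_filter_lt_le hx hcard (by lia)
  rw [nsmul_eq_mul, nsmul_one, Nat.cast_sub (by lia), Nat.cast_pred hk] at hsum
  have hden : (0 : ℝ) < #W - k + 1 := by
    have : (k : ℝ) ≤ #W := mod_cast hW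
    linarith
  rw [ge_iff_le, one_div_mul_eq_div, div_le_iff₀ hden]
  linarith

theorem symmetric_lower_bound (n k : ℕ) (hk : 1 ≤ k) (hkn : k ≤ n)
    (x : Fin n → ℝ) (hx : ∀ i, 0 ≤ x i ∧ x i ≤ 1)
    (W : Finset (Fin n)) (hW : k ≤ W.card) :
    Qk k x ≥ (1 / ((W.card : ℝ) - k + 1)) * ((∑ i ∈ W, x i) - k + 1) :=
  symmetric_lower_bound_general hk (fun i _ ↦ (hx i).2) hW
end

section
/- Let A be an m×n real matrix with entries a_{ij}, let 1 ≤ k ≤ m, and let x̃ ∈ {0,1}^n. Let P be a subset of {1,…,m} with |P| ≥ k such that Q_k(Ax̃) = min_{i ∈ P} Σ_{j=1}^n a_{ij} x̃_j. Then for every x ∈ {0,1}^n, Q_k(Ax) ≥ Q_k(Ax̃) + Σ_{j : x̃_j = 1} (x_j − 1) · max_{i ∈ P} a_{ij} + Σ_{j : x̃_j = 0} x_j · min_{i ∈ P} a_{ij}. Moreover, for x = x̃ this inequality holds with equality. -/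
lemma le_Qk_of_le_card {m k : ℕ} (hk : 1 ≤ k) {y : Fin m → ℝ} {P : Finset (Fin m)}
    (hP : k ≤ P.card) {c : ℝ} (hc : ∀ i ∈ P, c ≤ y i) : c ≤ Qk k y := by
  have hkm : k ≤ m := hP.trans (card_finset_fin_le P)
  have hpos : m - k < m := by omega
  -- Pigeonhole: the `k - 1` positions after `m - k` in sorted order cannot hold all of `P`.
  let largest := (Finset.Ioi (⟨m - k, hpos⟩ : Fin m)).map (Tuple.sort y).toEmbedding
  have hcard : largest.card < P.card := by
    rw [Finset.card_map, Fin.card_Ioi, Fin.val_mk]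
    omega
  obtain ⟨i, hiP, hi_largest⟩ := Finset.exists_mem_notMem_of_card_lt_card hcard
  have hle : (Tuple.sort y).symm i ≤ ⟨m - k, hpos⟩ := by
    simpa [largest, Finset.mem_map_equiv] using hi_largest
  calc
    c ≤ y i := hc i hiP
    _ ≤ y (Tuple.sort y ⟨m - k, hpos⟩) := by
      simpa using Tuple.monotone_sort y hle
    _ = Qk k y := by rw [Qk, dif_pos hpos]

section BinaryVector

variable {ι R : Type*} [Fintype ι] [DecidableEq R]

lemma sum_filter_one_add_sum_filter_zero [Zero R] [One R] [NeZero (1 : R)] {M : Type*}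
    [AddCommMonoid M] {xt : ι → R} (hxt : ∀ j, xt j = 0 ∨ xt j = 1) (f : ι → M) :
    ∑ j with xt j = 1, f j + ∑ j with xt j = 0, f j = ∑ j, f j := by
  have hzero : ∀ j, xt j = 0 ↔ ¬xt j = 1 := fun j =>
    ⟨fun h0 h1 => zero_ne_one (h0.symm.trans h1), (hxt j).resolve_right⟩
  simp only [hzero, Finset.sum_filter_add_sum_filter_not]

/-- The correction `∑_{x̃_j = 1} (x_j - 1) hi_j + ∑_{x̃_j = 0} x_j lo_j` attached to a binary vector
`x̃` (here `xt`): a lower estimate for the change from `x̃` to `x` of a linear form whose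
coefficients lie between `lo` and `hi`. -/
def binaryIncrement [NonAssocRing R] (lo hi xt x : ι → R) : R :=
  ∑ j with xt j = 1, (x j - 1) * hi j + ∑ j with xt j = 0, x j * lo j

lemma binaryIncrement_self [NonAssocRing R] (lo hi xt : ι → R) :
    binaryIncrement lo hi xt xt = 0 := by
  have hone : ∑ j with xt j = 1, (xt j - 1) * hi j = 0 :=
    Finset.sum_eq_zero fun j hj => by rw [(Finset.mem_filter.mp hj).2, sub_self, zero_mul]
  have hzero : ∑ j with xt j = 0, xt j * lo j = 0 :=
    Finset.sum_eq_zero fun j hj => by rw [(Finset.mem_filter.mp hj).2, zero_mul]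
  rw [binaryIncrement, hone, hzero, add_zero]

lemma binaryIncrement_le_dotProduct_sub [CommRing R] [PartialOrder R] [IsOrderedRing R]
    [Nontrivial R] {a lo hi xt x : ι → R} (hxt : ∀ j, xt j = 0 ∨ xt j = 1)
    (hlo : lo ≤ a) (hhi : a ≤ hi)
    (hx_one : ∀ j, xt j = 1 → x j ≤ 1) (hx_zero : ∀ j, xt j = 0 → 0 ≤ x j) :
    binaryIncrement lo hi xt x ≤ a ⬝ᵥ (x - xt) := by
  rw [dotProduct, ← sum_filter_one_add_sum_filter_zero hxt]
  refine add_le_add (Finset.sum_le_sum fun j hj => ?_) (Finset.sum_le_sum fun j hj => ?_)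
  · have hj_one : xt j = 1 := (Finset.mem_filter.mp hj).2
    rw [Pi.sub_apply, hj_one, mul_comm (a j)]
    exact mul_le_mul_of_nonpos_left (hhi j) (sub_nonpos.mpr (hx_one j hj_one))
  · have hj_zero : xt j = 0 := (Finset.mem_filter.mp hj).2
    rw [Pi.sub_apply, hj_zero, sub_zero, mul_comm (a j)]
    exact mul_le_mul_of_nonneg_left (hlo j) (hx_zero j hj_zero)

end BinaryVector

section Quantile

variable {ι : Type*} [Fintype ι] {m k : ℕ} {xt : ι → ℝ} {P : Finset (Fin m)}

lemma inf'_mulVec_add_binaryIncrement_le_Qk_mulVec (hk : 1 ≤ k) (hP : k ≤ P.card)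
    (hne : P.Nonempty) (A : Matrix (Fin m) ι ℝ) (hxt : ∀ j, xt j = 0 ∨ xt j = 1) {x : ι → ℝ}
    (hx_one : ∀ j, xt j = 1 → x j ≤ 1) (hx_zero : ∀ j, xt j = 0 → 0 ≤ x j) :
    P.inf' hne (A.mulVec xt) +
        binaryIncrement (fun j => P.inf' hne (A · j)) (fun j => P.sup' hne (A · j)) xt x ≤
      Qk k (A.mulVec x) := by
  refine le_Qk_of_le_card hk hP fun i hi => ?_
  have hmin : P.inf' hne (A.mulVec xt) ≤ A.mulVec xt i := Finset.inf'_le _ hi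
  have hincr := binaryIncrement_le_dotProduct_sub hxt
    (fun j => Finset.inf'_le (A · j) hi) (fun j => Finset.le_sup' (A · j) hi) hx_one hx_zero
  calc
    _ ≤ A.mulVec xt i + A i ⬝ᵥ (x - xt) := add_le_add hmin hincr
    _ = A.mulVec xt i + (A.mulVec x i - A.mulVec xt i) := by
      rw [dotProduct_sub, Matrix.mulVec, Matrix.mulVec]
    _ = A.mulVec x i := add_sub_cancel _ _

theorem generated_subset_constraint_general (hk : 1 ≤ k) (hP : k ≤ P.card) (hne : P.Nonempty)
    (A : Matrix (Fin m) ι ℝ) (hxt : ∀ j, xt j = 0 ∨ xt j = 1)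
    (hQ : Qk k (A.mulVec xt) = P.inf' hne (A.mulVec xt)) :
    let increment :=
      binaryIncrement (fun j => P.inf' hne (A · j)) (fun j => P.sup' hne (A · j)) xt
    (∀ x : ι → ℝ, (∀ j, xt j = 1 → x j ≤ 1) → (∀ j, xt j = 0 → 0 ≤ x j) →
      Qk k (A.mulVec xt) + increment x ≤ Qk k (A.mulVec x)) ∧
    Qk k (A.mulVec xt) = Qk k (A.mulVec xt) + increment xt := by
  refine ⟨fun x hx_one hx_zero => ?_, ?_⟩
  · rw [hQ]
    exact inf'_mulVec_add_binaryIncrement_le_Qk_mulVec hk hP hne A hxt hx_one hx_zero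
  · rw [binaryIncrement_self, add_zero]

end Quantile

theorem generated_subset_constraint (m n k : ℕ) (hk : 1 ≤ k) (hkm : k ≤ m)
    (A : Matrix (Fin m) (Fin n) ℝ)
    (xt : Fin n → ℝ) (hxt : ∀ j, xt j = 0 ∨ xt j = 1)
    (P : Finset (Fin m)) (hP : k ≤ P.card)
    (hQ : Qk k (A.mulVec xt) =
      P.inf' (Finset.card_pos.mp (by omega)) fun i => ∑ j, A i j * xt j) :
    (∀ x : Fin n → ℝ, (∀ j, x j = 0 ∨ x j = 1) →
      Qk k (A.mulVec x) ≥ Qk k (A.mulVec xt) +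
        (∑ j ∈ Finset.univ.filter fun j => xt j = 1,
          (x j - 1) * P.sup' (Finset.card_pos.mp (by omega)) fun i => A i j) +
        (∑ j ∈ Finset.univ.filter fun j => xt j = 0,
          x j * P.inf' (Finset.card_pos.mp (by omega)) fun i => A i j)) ∧
    Qk k (A.mulVec xt) = Qk k (A.mulVec xt) +
        (∑ j ∈ Finset.univ.filter fun j => xt j = 1,
          (xt j - 1) * P.sup' (Finset.card_pos.mp (by omega)) fun i => A i j) +
        (∑ j ∈ Finset.univ.filter fun j => xt j = 0,
          xt j * P.inf' (Finset.card_pos.mp (by omega)) fun i => A i j) := by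
  simp only [add_assoc]
  obtain ⟨hle, heq⟩ := generated_subset_constraint_general hk hP _ A hxt hQ
  exact ⟨fun x hx => hle x
    (fun j _ => (hx j).elim (fun h => h.trans_le zero_le_one) le_of_eq)
    (fun j _ => (hx j).elim Eq.ge fun h => zero_le_one.trans_eq h.symm), heq⟩
end

section
/- Let A be an m×n real matrix with entries a_{ij}, let 1 ≤ k ≤ m, let l, u, x ∈ ℝ^n with l_j ≤ x_j ≤ u_j for all j, let β ∈ [0,1]^n, and let P be a subset of {1,…,m} with |P| ≥ k. Then Q_k(Ax) ≥ Σ_{j=1}^n (1 − β_j) · ( min_{i ∈ P} a_{ij} ) · (x_j − l_j) + Σ_{j=1}^n β_j · ( max_{i ∈ P} a_{ij} ) · (x_j − u_j) + min_{i ∈ P} Σ_{j=1}^n (1 − β_j) a_{ij} l_j + min_{i ∈ P} Σ_{j=1}^n β_j a_{ij} u_j. -/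
open Finset

lemma lt_card_le_sort {α : Type*} [LinearOrder α] {m : ℕ} (y : Fin m → α) (p : Fin m) :
    (p : ℕ) < #{i | y i ≤ y (Tuple.sort y p)} := by
  have hsorted : (p : ℕ) < #{q | (y ∘ Tuple.sort y) q ≤ y (Tuple.sort y p)} :=
    (Tuple.lt_card_le_iff_apply_le_of_monotone (Tuple.monotone_sort y)).mpr le_rfl
  rwa [card_equiv (Tuple.sort y) (t := {i | y i ≤ y (Tuple.sort y p)}) (by simp)] at hsorted

lemma sub_lt_card_le_Qk {m k : ℕ} (h : m - k < m) (y : Fin m → ℝ) :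
    m - k < #{i | y i ≤ Qk k y} := by
  simpa only [Qk, dif_pos h] using lt_card_le_sort y ⟨m - k, h⟩

lemma exists_mem_le_Qk {m k : ℕ} (hk : 1 ≤ k) (y : Fin m → ℝ) {P : Finset (Fin m)}
    (hP : k ≤ #P) : ∃ i ∈ P, y i ≤ Qk k y := by
  have hPm : #P ≤ m := card_finset_fin_le P
  have hlow : m - k < #{i | y i ≤ Qk k y} := sub_lt_card_le_Qk (by omega) y
  obtain ⟨i, hi⟩ := inter_nonempty_of_card_lt_card_add_card (subset_univ P)
    (subset_univ {i | y i ≤ Qk k y}) (by rw [card_fin]; omega)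
  exact ⟨i, by simpa using hi⟩

section DotProduct

variable {ι R : Type*} [Fintype ι] [CommRing R]

lemma dotProduct_eq_sum_mul_sub_add_sum_mul (a x l u β : ι → R) :
    a ⬝ᵥ x = ∑ j, (1 - β j) * a j * (x j - l j) + ∑ j, β j * a j * (x j - u j) +
      ∑ j, (1 - β j) * a j * l j + ∑ j, β j * a j * u j := by
  simp only [dotProduct, ← sum_add_distrib]
  exact sum_congr rfl fun j _ => by ring

lemma sum_mul_sub_add_sum_mul_le_dotProduct [PartialOrder R] [IsOrderedRing R]
    {a b c x l u β : ι → R} (hba : b ≤ a) (hac : a ≤ c) (hlx : l ≤ x) (hxu : x ≤ u)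
    (hβ₀ : 0 ≤ β) (hβ₁ : β ≤ 1) :
    ∑ j, (1 - β j) * b j * (x j - l j) + ∑ j, β j * c j * (x j - u j) +
      ∑ j, (1 - β j) * a j * l j + ∑ j, β j * a j * u j ≤ a ⬝ᵥ x := by
  have hlower (j : ι) : (1 - β j) * b j * (x j - l j) ≤ (1 - β j) * a j * (x j - l j) :=
    mul_le_mul_of_nonneg_right (mul_le_mul_of_nonneg_left (hba j) (sub_nonneg.mpr (hβ₁ j)))
      (sub_nonneg.mpr (hlx j))
  have hupper (j : ι) : β j * c j * (x j - u j) ≤ β j * a j * (x j - u j) :=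
    mul_le_mul_of_nonpos_right (mul_le_mul_of_nonneg_left (hac j) (hβ₀ j))
      (sub_nonpos.mpr (hxu j))
  rw [dotProduct_eq_sum_mul_sub_add_sum_mul a x l u β]
  gcongr ?_ + ?_ + _ + _
  · exact sum_le_sum fun j _ => hlower j
  · exact sum_le_sum fun j _ => hupper j

end DotProduct

theorem general_subset_constraint (m n k : ℕ) (hk : 1 ≤ k) (hkm : k ≤ m)
    (A : Matrix (Fin m) (Fin n) ℝ)
    (l u x : Fin n → ℝ) (hlx : ∀ j, l j ≤ x j) (hxu : ∀ j, x j ≤ u j)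
    (β : Fin n → ℝ) (hβ : ∀ j, 0 ≤ β j ∧ β j ≤ 1)
    (P : Finset (Fin m)) (hP : k ≤ P.card) :
    Qk k (A.mulVec x) ≥
      (∑ j, (1 - β j) * (P.inf' (Finset.card_pos.mp (by omega)) fun i => A i j) * (x j - l j)) +
      (∑ j, β j * (P.sup' (Finset.card_pos.mp (by omega)) fun i => A i j) * (x j - u j)) +
      (P.inf' (Finset.card_pos.mp (by omega)) fun i => ∑ j, (1 - β j) * A i j * l j) +
      (P.inf' (Finset.card_pos.mp (by omega)) fun i => ∑ j, β j * A i j * u j) := by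
  obtain ⟨i, hi, hiQ⟩ := exists_mem_le_Qk hk (A.mulVec x) hP
  have hrow := sum_mul_sub_add_sum_mul_le_dotProduct
    (fun j => inf'_le (fun i => A i j) hi) (fun j => le_sup' (fun i => A i j) hi)
    hlx hxu (fun j => (hβ j).1) (fun j => (hβ j).2)
  refine le_trans ?_ (hrow.trans hiQ)
  gcongr
  · exact inf'_le (fun i => ∑ j, (1 - β j) * A i j * l j) hi
  · exact inf'_le (fun i => ∑ j, β j * A i j * u j) hi
end
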